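/- Let T be an n-vertex tournament and let Empty = {d ∈ {0,…,n−1} : DB_T[d] = ∅} be its empty set. Then |Empty| ≤ 12(ADT(T) + 1). -/

import Mathlib

variable {V : Type*}

def IsTournament (E : V → V → Prop) : Prop :=
  (∀ v : V, ¬ E v v) ∧ ∀ u v : V, u ≠ v → (E u v ↔ ¬ E v u)

def Acyclic (E : V → V → Prop) : Prop :=
  ∀ v : V, ¬ Relation.TransGen E v v

noncomputable def indeg [Fintype V] (E : V → V → Prop) (v : V) : ℕ :=
  Set.ncard {u : V | E u v}

noncomputable def indegOn [Fintype V] (E : V → V → Prop) (X : Set V) (v : V) : ℕ :=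
  Set.ncard {u : V | u ∈ X ∧ E u v}

def IsTriangle (E : V → V → Prop) (t : V × V × V) : Prop :=
  E t.1 t.2.1 ∧ E t.2.1 t.2.2 ∧ E t.2.2 t.1

def triArcs (t : V × V × V) : Set (V × V) :=
  {(t.1, t.2.1), (t.2.1, t.2.2), (t.2.2, t.1)}

def IsADTFamily (E : V → V → Prop) (F : Finset (V × V × V)) : Prop :=
  (∀ t ∈ F, IsTriangle E t) ∧
    ∀ t ∈ F, ∀ s ∈ F, t ≠ s → Disjoint (triArcs t) (triArcs s)

noncomputable def ADT (E : V → V → Prop) : ℕ :=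
  sSup {n : ℕ | ∃ F : Finset (V × V × V), IsADTFamily E F ∧ F.card = n}

def IsFAS (E : V → V → Prop) (S : Finset (V × V)) : Prop :=
  Acyclic fun u v => E u v ∧ (u, v) ∉ S

noncomputable def FAST (E : V → V → Prop) : ℕ :=
  sInf {n : ℕ | ∃ S : Finset (V × V), IsFAS E S ∧ S.card = n}

def IsFVS (E : V → V → Prop) (F : Finset V) : Prop :=
  Acyclic fun a b => E a b ∧ a ∉ F ∧ b ∉ F

noncomputable def FVST [Fintype V] (E : V → V → Prop) : ℕ :=
  sInf {n : ℕ | ∃ F : Finset V, IsFVS E F ∧ F.card = n}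

noncomputable def maxdb [Fintype V] (E : V → V → Prop) : ℕ :=
  (Finset.range (Fintype.card V)).sup fun d => Set.ncard {v : V | indeg E v = d}

open Classical in
noncomputable def prefLen [Fintype V] (E : V → V → Prop) : ℕ :=
  if ∀ d < Fintype.card V, Set.ncard {v : V | indeg E v = d} = 1 then Fintype.card V
  else sInf {d : ℕ | d < Fintype.card V ∧ Set.ncard {v : V | indeg E v = d} ≠ 1}

noncomputable def prefSet [Fintype V] (E : V → V → Prop) : Set V :=
  {v : V | indeg E v < prefLen E}

noncomputable def minIndeg [Fintype V] (E : V → V → Prop) : ℕ :=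
  sInf {k : ℕ | ∃ v : V, indeg E v = k}

noncomputable def minIndegOn [Fintype V] (E : V → V → Prop) (X : Set V) : ℕ :=
  sInf {k : ℕ | ∃ v ∈ X, indegOn E X v = k}

def emptyBuckets [Fintype V] (E : V → V → Prop) : Set ℕ :=
  {d : ℕ | d < Fintype.card V ∧ {v : V | indeg E v = d} = ∅}

def backArcs [Fintype V] (E : V → V → Prop) : Set (V × V) :=
  {p : V × V | E p.1 p.2 ∧ indeg E p.2 ≤ indeg E p.1}

def reverseArc (E : V → V → Prop) (u v : V) : V → V → Prop :=
  fun a b =>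
    (¬ ((a, b) = (u, v) ∨ (a, b) = (v, u)) ∧ E a b) ∨
      ((a, b) = (u, v) ∧ E v u) ∨ ((a, b) = (v, u) ∧ E u v)

def affected [Fintype V] (E : V → V → Prop) (u v : V) : Set V :=
  {w : V | indeg E w + 1 = indeg E u ∨ indeg E w = indeg E u ∨ indeg E w = indeg E u + 1 ∨
      indeg E w + 1 = indeg E v ∨ indeg E w = indeg E v ∨ indeg E w = indeg E v + 1}

def kLong [Fintype V] (E : V → V → Prop) (k : ℕ) (p : V × V) : Prop :=
  (k : ℤ) ≤ |(indeg E p.1 : ℤ) - (indeg E p.2 : ℤ)|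

def longAdj [Fintype V] (E : V → V → Prop) (k : ℕ) (a b : V) : Prop :=
  ((a, b) ∈ backArcs E ∧ kLong E k (a, b)) ∨ ((b, a) ∈ backArcs E ∧ kLong E k (b, a))

def heavySet [Fintype V] (E : V → V → Prop) (k : ℕ) : Set V :=
  {v : V | k < Set.ncard {u : V | longAdj E k u v}}

/-!
Let `F` be a maximum family of arc-disjoint triangles and `X` the set of its at most `3 |F|`
vertices. A triangle with an arc `u → v` outside `X` has a vertex outside `X` on each of its arcs,
hence is arc-disjoint from `F`; by maximality there is none. So every `w → u` has `w → v`, and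
`indeg u < indeg v`. In-degrees are therefore distinct off `X`, and at most `|X|` buckets are empty.
-/

section EmptyBuckets

variable {E : V → V → Prop} {u v : V}

lemma IsTournament.asymm (hT : IsTournament E) (huv : E u v) : ¬ E v u :=
  (hT.2 u v fun h => hT.1 v (h ▸ huv)).mp huv

lemma IsTournament.total (hT : IsTournament E) (huv : u ≠ v) : E u v ∨ E v u :=
  or_iff_not_imp_right.mpr (hT.2 u v huv).mpr

lemma indeg_lt_card [Fintype V] (hv : ¬ E v v) : indeg E v < Fintype.card V := by
  rw [← Nat.card_eq_fintype_card]
  exact Set.ncard_lt_card fun h => hv (h.symm ▸ Set.mem_univ v : v ∈ {u | E u v})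

lemma IsTournament.indeg_lt_indeg [Fintype V] (hT : IsTournament E) (huv : E u v)
    (h : ∀ w, ¬ IsTriangle E (u, v, w)) : indeg E u < indeg E v := by
  have hsub : {w | E w u} ⊆ {w | E w v} := fun w hwu =>
    (hT.total (by rintro rfl; exact hT.asymm huv hwu)).resolve_right
      fun hvw => h w ⟨huv, hvw, hwu⟩
  exact Set.ncard_lt_ncard ((Set.ssubset_iff_of_subset hsub).mpr ⟨u, huv, hT.1 u⟩)

lemma IsTournament.injOn_indeg [Fintype V] (hT : IsTournament E) {U : Set V}
    (h : ∀ u ∈ U, ∀ v ∈ U, ∀ w, ¬ IsTriangle E (u, v, w)) : Set.InjOn (indeg E) U := by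
  intro u hu v hv heq
  by_contra hne
  rcases hT.total hne with huv | hvu
  · exact (hT.indeg_lt_indeg huv (h u hu v hv)).ne heq
  · exact (hT.indeg_lt_indeg hvu (h v hv u hu)).ne' heq

lemma emptyBuckets_eq_Iio_sdiff_range [Fintype V] (E : V → V → Prop) :
    emptyBuckets E = Set.Iio (Fintype.card V) \ Set.range (indeg E) := by
  ext d
  simp [emptyBuckets, Set.eq_empty_iff_forall_notMem]

lemma ncard_emptyBuckets_le_of_injOn [Fintype V] (hE : ∀ v, ¬ E v v) {U : Set V}
    (hU : Set.InjOn (indeg E) U) : (emptyBuckets E).ncard ≤ Uᶜ.ncard := by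
  have hrange : Set.range (indeg E) ⊆ Set.Iio (Fintype.card V) :=
    Set.range_subset_iff.mpr fun v => indeg_lt_card (hE v)
  have hbuckets : (emptyBuckets E).ncard + (Set.range (indeg E)).ncard = Fintype.card V := by
    rw [emptyBuckets_eq_Iio_sdiff_range, Set.ncard_sdiff_add_ncard_of_subset hrange,
      Set.ncard_Iio_nat]
  have hcompl : U.ncard + Uᶜ.ncard = Fintype.card V := by
    rw [Set.ncard_add_ncard_compl, Nat.card_eq_fintype_card]
  have himage : U.ncard ≤ (Set.range (indeg E)).ncard := by
    rw [← hU.ncard_image]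
    exact Set.ncard_le_ncard (Set.image_subset_range _ _)
  lia

end EmptyBuckets

section Triangles

variable {E : V → V → Prop} {F : Finset (V × V × V)} {t : V × V × V}

/-- The set of all vertices of the triangles in `F`. For a maximum arc-disjoint family, in-degrees
are distinct off this set. -/
def triangleVertices [DecidableEq V] (F : Finset (V × V × V)) : Finset V :=
  F.biUnion fun t => {t.1, t.2.1, t.2.2}

lemma card_triangleVertices_le [DecidableEq V] (F : Finset (V × V × V)) :
    (triangleVertices F).card ≤ 3 * F.card := by
  rw [mul_comm]
  exact Finset.card_biUnion_le_card_mul _ _ _ fun _ _ => Finset.card_le_three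

lemma endpoints_mem_triangleVertices [DecidableEq V] (ht : t ∈ F) {p : V × V}
    (hp : p ∈ triArcs t) : p.1 ∈ triangleVertices F ∧ p.2 ∈ triangleVertices F := by
  have hsub : {t.1, t.2.1, t.2.2} ⊆ triangleVertices F :=
    Finset.subset_biUnion_of_mem (fun t : V × V × V => ({t.1, t.2.1, t.2.2} : Finset V)) ht
  rcases hp with rfl | rfl | rfl <;> exact ⟨hsub (by simp), hsub (by simp)⟩

lemma IsADTFamily.cons (hF : IsADTFamily E F) (ht : IsTriangle E t)
    (hdisj : ∀ s ∈ F, Disjoint (triArcs t) (triArcs s)) (htF : t ∉ F) :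
    IsADTFamily E (F.cons t htF) := by
  refine ⟨(Finset.forall_mem_cons htF _).mpr ⟨ht, hF.1⟩, ?_⟩
  intro s hs r hr hsr
  rcases Finset.mem_cons.mp hs with rfl | hsF <;> rcases Finset.mem_cons.mp hr with rfl | hrF
  · exact absurd rfl hsr
  · exact hdisj r hrF
  · exact (hdisj s hsF).symm
  · exact hF.2 s hsF r hrF hsr

lemma bddAbove_card_isADTFamily [Finite V] (E : V → V → Prop) :
    BddAbove {n : ℕ | ∃ F : Finset (V × V × V), IsADTFamily E F ∧ F.card = n} := by
  have := Fintype.ofFinite V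
  refine ⟨Fintype.card (V × V × V), ?_⟩
  rintro n ⟨F, -, rfl⟩
  exact Finset.card_le_univ F

lemma IsADTFamily.card_le_ADT [Finite V] (hF : IsADTFamily E F) : F.card ≤ ADT E :=
  le_csSup (bddAbove_card_isADTFamily E) ⟨F, hF, rfl⟩

lemma exists_isADTFamily_card_eq_ADT [Finite V] (E : V → V → Prop) :
    ∃ F : Finset (V × V × V), IsADTFamily E F ∧ F.card = ADT E :=
  Nat.sSup_mem (s := {n | ∃ F : Finset (V × V × V), IsADTFamily E F ∧ F.card = n})
    ⟨0, ∅, by simp [IsADTFamily], rfl⟩ (bddAbove_card_isADTFamily E)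

lemma IsADTFamily.exists_not_disjoint [Finite V] (hF : IsADTFamily E F) (hmax : F.card = ADT E)
    (ht : IsTriangle E t) : ∃ s ∈ F, ¬ Disjoint (triArcs t) (triArcs s) := by
  by_contra! hdisj
  have htF : t ∉ F := fun htF =>
    Set.disjoint_left.mp (hdisj t htF) (Set.mem_insert _ _) (Set.mem_insert _ _)
  have hcard := (hF.cons ht hdisj htF).card_le_ADT
  rw [Finset.card_cons] at hcard
  lia

lemma IsADTFamily.not_isTriangle_of_notMem_triangleVertices [Finite V] [DecidableEq V]
    (hF : IsADTFamily E F) (hmax : F.card = ADT E) {u v : V} (hu : u ∉ triangleVertices F)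
    (hv : v ∉ triangleVertices F) (w : V) : ¬ IsTriangle E (u, v, w) := by
  intro ht
  obtain ⟨s, hs, hmeet⟩ := hF.exists_not_disjoint hmax ht
  obtain ⟨p, hpt, hps⟩ := Set.not_disjoint_iff.mp hmeet
  have hp := endpoints_mem_triangleVertices hs hps
  rcases hpt with rfl | rfl | rfl
  · exact hu hp.1
  · exact hv hp.1
  · exact hu hp.2

end Triangles

theorem stmt7_general [Fintype V] (E : V → V → Prop) (hT : IsTournament E) :
    Set.ncard (emptyBuckets E) ≤ 3 * ADT E := by
  classical
  obtain ⟨F, hF, hmax⟩ := exists_isADTFamily_card_eq_ADT E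
  have hinj : Set.InjOn (indeg E) (↑(triangleVertices F))ᶜ := hT.injOn_indeg
    fun u hu v hv => hF.not_isTriangle_of_notMem_triangleVertices hmax hu hv
  calc Set.ncard (emptyBuckets E)
      ≤ Set.ncard (↑(triangleVertices F) : Set V)ᶜᶜ := ncard_emptyBuckets_le_of_injOn hT.1 hinj
    _ = (triangleVertices F).card := by rw [compl_compl, Set.ncard_coe_finset]
    _ ≤ 3 * F.card := card_triangleVertices_le F
    _ = 3 * ADT E := by rw [hmax]

/-- The empty set of a tournament has size at most 12(ADT(T) + 1). -/
theorem stmt7 [Fintype V] (E : V → V → Prop) (hT : IsTournament E) :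
    Set.ncard (emptyBuckets E) ≤ 12 * (ADT E + 1) := by
  have := stmt7_general E hT
  lia
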